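/- For every fixed integer k ≥ 2, the sequences (s(n,k))_{n=k+1}^∞ and (s'(n,k))_{n=k+1}^∞ are non-decreasing in n. -/

import Mathlib

/-!
The proof averages over vertex deletions. For a hypergraph `𝓔` on `n + 1` vertices, deleting the
vertex `i` gives a hypergraph on `n` vertices whose edges are the traces `E \ {i}`; linearity is
inherited, and the family `𝓔_k ∪ 𝓔⁰_{k+1}` of the deletion consists exactly of those members of
the original family that avoid `i` (`mem_family_trace`). A set of size `s ≤ n` avoids
`n + 1 - s` vertices, and `(n + 1 - s) / C(n, s) = (n + 1) / C(n + 1, s)`, so the average of the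
`n + 1` sums of the deletions is the sum of `𝓔` (`sum_hSum_trace`). Hence a lower bound valid for
all the deletions is valid for `𝓔`; the sums are bounded below by `0`, which makes each infimum
such a lower bound.
-/

open Finset

/-- A hypergraph (edge set `𝓔` over vertex type `α`) is `q`-linear if any two
distinct edges intersect in fewer than `q` vertices. -/
def qLinear {α : Type*} [DecidableEq α] (q : ℕ) (𝓔 : Finset (Finset α)) : Prop :=
  ∀ E ∈ 𝓔, ∀ E' ∈ 𝓔, E ≠ E' → (E ∩ E').card < q

/-- `𝓔_k`: the family of `k`-element sets contained in some edge of `𝓔`. -/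
def secE {α : Type*} [DecidableEq α] (k : ℕ) (𝓔 : Finset (Finset α)) :
    Finset (Finset α) :=
  𝓔.biUnion fun E => E.powersetCard k

/-- `𝓔⁰_{k+1}` (relative to vertex set `V`): the `(k+1)`-element subsets of `V`
none of whose `k`-element subsets belongs to `𝓔_k`. -/
def zeroE {α : Type*} [DecidableEq α] (V : Finset α) (k : ℕ)
    (𝓔 : Finset (Finset α)) : Finset (Finset α) :=
  (V.powersetCard (k + 1)).filter fun F => ∀ G ∈ F.powersetCard k, G ∉ secE k 𝓔

/-- The YBLM-type sum `Σ_{S ∈ 𝓔_k ∪ 𝓔⁰_{k+1}} C(n,|S|)⁻¹` for a hypergraph on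
`n` vertices. -/
noncomputable def hSum (n k : ℕ) (𝓔 : Finset (Finset (Fin n))) : ℝ :=
  ∑ S ∈ secE k 𝓔 ∪ zeroE Finset.univ k 𝓔, ((n.choose S.card : ℝ))⁻¹

/-- `s(n,k)`: the minimum of `hSum n k 𝓔` over all `(k-1)`-linear hypergraphs
on `n` vertices. -/
noncomputable def sVal (n k : ℕ) : ℝ :=
  sInf {r : ℝ | ∃ 𝓔 : Finset (Finset (Fin n)), qLinear (k - 1) 𝓔 ∧ r = hSum n k 𝓔}

/-- `s'(n,k)`: the minimum of `hSum n k 𝓔` over all hypergraphs on `n`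
vertices. -/
noncomputable def s'Val (n k : ℕ) : ℝ :=
  sInf {r : ℝ | ∃ 𝓔 : Finset (Finset (Fin n)), r = hSum n k 𝓔}

/-- The trace of `𝓔` on the complement of the vertex `i`, relabelled by `Fin n` through
`i.succAbove`. -/
def trace {n : ℕ} (i : Fin (n + 1)) (𝓔 : Finset (Finset (Fin (n + 1)))) :
    Finset (Finset (Fin n)) :=
  𝓔.image fun E => univ.filter fun x => i.succAbove x ∈ E

lemma map_filter_subset {n : ℕ} (i : Fin (n + 1)) (E : Finset (Fin (n + 1))) :
    (univ.filter fun x => i.succAbove x ∈ E).map i.succAboveEmb ⊆ E := by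
  intro y hy
  simp only [mem_map, mem_filter, mem_univ, true_and] at hy
  obtain ⟨x, hx, rfl⟩ := hy
  exact hx

lemma qLinear_trace {n q : ℕ} (i : Fin (n + 1)) {𝓔 : Finset (Finset (Fin (n + 1)))}
    (h : qLinear q 𝓔) : qLinear q (trace i 𝓔) := by
  intro A hA B hB hne
  simp only [trace, mem_image] at hA hB
  obtain ⟨E, hE, rfl⟩ := hA
  obtain ⟨E', hE', rfl⟩ := hB
  have hEE : E ≠ E' := by
    rintro rfl
    exact hne rfl
  refine lt_of_le_of_lt ?_ (h E hE E' hE' hEE)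
  rw [← card_map i.succAboveEmb, map_inter]
  exact card_le_card (inter_subset_inter (map_filter_subset i E) (map_filter_subset i E'))

lemma mem_secE_trace {n k : ℕ} (i : Fin (n + 1)) (𝓔 : Finset (Finset (Fin (n + 1))))
    (S : Finset (Fin n)) :
    S ∈ secE k (trace i 𝓔) ↔ S.map i.succAboveEmb ∈ secE k 𝓔 := by
  simp only [secE, trace, mem_biUnion, mem_image, mem_powersetCard, exists_exists_and_eq_and,
    card_map, subset_iff, mem_filter, mem_univ, true_and, mem_map, forall_exists_index, and_imp,
    forall_apply_eq_imp_iff₂, Fin.succAboveEmb_apply]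

lemma mem_zeroE_trace {n k : ℕ} (i : Fin (n + 1)) (𝓔 : Finset (Finset (Fin (n + 1))))
    (S : Finset (Fin n)) :
    S ∈ zeroE univ k (trace i 𝓔) ↔ S.map i.succAboveEmb ∈ zeroE univ k 𝓔 := by
  simp only [zeroE, mem_filter, mem_powersetCard, subset_univ, true_and, card_map, mem_secE_trace]
  refine and_congr_right fun _ => ⟨fun h G hG => ?_, fun h G hG => ?_⟩
  · obtain ⟨T, hT, rfl⟩ := subset_map_iff.1 hG.1
    exact h T ⟨hT, by simpa using hG.2⟩
  · exact h _ ⟨map_subset_map.2 hG.1, by simpa using hG.2⟩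

lemma mem_family_trace {n k : ℕ} (i : Fin (n + 1)) (𝓔 : Finset (Finset (Fin (n + 1))))
    (S : Finset (Fin n)) :
    S ∈ secE k (trace i 𝓔) ∪ zeroE univ k (trace i 𝓔) ↔
      S.map i.succAboveEmb ∈ secE k 𝓔 ∪ zeroE univ k 𝓔 := by
  rw [mem_union, mem_union, mem_secE_trace, mem_zeroE_trace]

lemma exists_map_succAbove {n : ℕ} {i : Fin (n + 1)} {T : Finset (Fin (n + 1))} (h : i ∉ T) :
    ∃ S : Finset (Fin n), T = S.map i.succAboveEmb := by
  have hT : T ⊆ (univ : Finset (Fin n)).map i.succAboveEmb := by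
    intro y hy
    obtain ⟨z, hz⟩ := Fin.exists_succAbove_eq (x := y) (y := i) (by rintro rfl; exact h hy)
    exact mem_map.2 ⟨z, mem_univ z, hz⟩
  obtain ⟨S, -, hS⟩ := subset_map_iff.1 hT
  exact ⟨S, hS⟩

lemma hSum_trace {n k : ℕ} (i : Fin (n + 1)) (𝓔 : Finset (Finset (Fin (n + 1)))) :
    hSum n k (trace i 𝓔) =
      ∑ T ∈ secE k 𝓔 ∪ zeroE univ k 𝓔, if i ∉ T then ((n.choose T.card : ℝ))⁻¹ else 0 := by
  rw [← sum_filter, hSum]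
  refine sum_bij (fun S _ => S.map i.succAboveEmb) ?_ ?_ ?_ ?_
  · intro S hS
    refine mem_filter.2 ⟨(mem_family_trace i 𝓔 S).1 hS, ?_⟩
    simp [Fin.succAbove_ne]
  · intro S _ T _ h
    exact map_injective _ h
  · intro T hT
    obtain ⟨hT, hi⟩ := mem_filter.1 hT
    obtain ⟨S, rfl⟩ := exists_map_succAbove hi
    exact ⟨S, (mem_family_trace i 𝓔 S).2 hT, rfl⟩
  · intro S _
    rw [card_map]

lemma card_le_of_mem_family {n k : ℕ} {𝓔 : Finset (Finset (Fin n))} {T : Finset (Fin n)}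
    (hT : T ∈ secE k 𝓔 ∪ zeroE univ k 𝓔) : T.card ≤ k + 1 := by
  rcases mem_union.1 hT with h | h
  · simp only [secE, mem_biUnion, mem_powersetCard] at h
    obtain ⟨_, _, _, h⟩ := h
    omega
  · simp only [zeroE, mem_filter, mem_powersetCard] at h
    omega

lemma sub_mul_inv_choose {n s : ℕ} (h : s ≤ n) :
    ((n + 1 - s : ℕ) : ℝ) * ((n.choose s : ℝ))⁻¹ =
      ((n + 1 : ℕ) : ℝ) * (((n + 1).choose s : ℝ))⁻¹ := by
  have h1 : ((n.choose s : ℕ) : ℝ) ≠ 0 := by exact_mod_cast (Nat.choose_pos h).ne'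
  have h2 : (((n + 1).choose s : ℕ) : ℝ) ≠ 0 := by
    exact_mod_cast (Nat.choose_pos (by omega)).ne'
  have h3 : (n.choose s : ℝ) * ((n + 1 : ℕ) : ℝ) =
      ((n + 1).choose s : ℝ) * ((n + 1 - s : ℕ) : ℝ) := by
    exact_mod_cast Nat.choose_mul_succ_eq n s
  rw [← div_eq_mul_inv, ← div_eq_mul_inv, div_eq_div_iff h1 h2]
  linarith

/-- Double counting of the pairs `(i, T)` with `T` in the family and `i ∉ T`. -/
lemma sum_hSum_trace {n k : ℕ} (hn : k + 1 ≤ n) (𝓔 : Finset (Finset (Fin (n + 1)))) :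
    ∑ i, hSum n k (trace i 𝓔) = ((n + 1 : ℕ) : ℝ) * hSum (n + 1) k 𝓔 := by
  simp_rw [hSum_trace]
  rw [sum_comm, hSum, mul_sum]
  refine sum_congr rfl fun T hT => ?_
  have hc : (univ.filter fun i => i ∉ T).card = n + 1 - T.card := by
    rw [filter_not, filter_mem_eq_inter, univ_inter, card_univ_sdiff, Fintype.card_fin]
  rw [← sum_filter, sum_const, hc, nsmul_eq_mul,
    sub_mul_inv_choose ((card_le_of_mem_family hT).trans hn)]

lemma le_hSum_succ {n k : ℕ} (hn : k + 1 ≤ n) (𝓔 : Finset (Finset (Fin (n + 1)))) {c : ℝ}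
    (h : ∀ i, c ≤ hSum n k (trace i 𝓔)) : c ≤ hSum (n + 1) k 𝓔 := by
  have h1 : ((n + 1 : ℕ) : ℝ) * c ≤ ((n + 1 : ℕ) : ℝ) * hSum (n + 1) k 𝓔 := by
    rw [← sum_hSum_trace hn]
    simpa using card_nsmul_le_sum univ (fun i => hSum n k (trace i 𝓔)) c fun i _ => h i
  exact le_of_mul_le_mul_left h1 (by positivity)

lemma hSum_nonneg {n k : ℕ} (𝓔 : Finset (Finset (Fin n))) : 0 ≤ hSum n k 𝓔 :=
  sum_nonneg fun _ _ => by positivity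

theorem s_monotone (k : ℕ) (hk : 2 ≤ k) :
    ∀ n : ℕ, k + 1 ≤ n → sVal n k ≤ sVal (n + 1) k ∧ s'Val n k ≤ s'Val (n + 1) k := by
  intro n hn
  constructor
  · refine le_csInf ⟨_, ∅, by simp [qLinear], rfl⟩ ?_
    rintro r ⟨𝓔, hlin, rfl⟩
    refine le_hSum_succ hn 𝓔 fun i => csInf_le ⟨0, ?_⟩ ⟨trace i 𝓔, qLinear_trace i hlin, rfl⟩
    rintro r ⟨𝓕, -, rfl⟩
    exact hSum_nonneg 𝓕
  · refine le_csInf ⟨_, ∅, rfl⟩ ?_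
    rintro r ⟨𝓔, rfl⟩
    refine le_hSum_succ hn 𝓔 fun i => csInf_le ⟨0, ?_⟩ ⟨trace i 𝓔, rfl⟩
    rintro r ⟨𝓕, rfl⟩
    exact hSum_nonneg 𝓕
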